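/- arXiv:2603.27478 — 9 statements merged into one kernel-verified Lean document; each statement's English description precedes it below -/
import Mathlib

section
/- Let U : ℝ → ℝ be twice continuously differentiable and convex, let f̂, F̂ : ℝ × ℝ → ℝ be given two-point functions, and let u_L, ū, u_R ∈ ℝ and λ > 0. Set A = f̂(ū, u_R), B = f̂(u_L, ū), FA = F̂(ū, u_R), FB = F̂(u_L, ū), and define the updated cell average u⁺ = ū − λ(A − B). If the CFL-type condition λ · (sup_{ξ ∈ [min(ū,u⁺), max(ū,u⁺)]} U''(ξ)) · (A − B)² ≤ 2·(U'(ū)(A − B) − FA + FB) holds, then the fully discrete cell entropy inequality U(u⁺) ≤ U(ū) − λ(FA − FB) holds. -/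
/-- Entropy stability of the first-order three-point fully discrete
finite-volume scheme (Lemma 3.1 with the CFL condition of Remark 3.2). -/
theorem firstOrder_entropy_stable
    (U : ℝ → ℝ) (hU : ContDiff ℝ 2 U) (hUconv : ConvexOn ℝ Set.univ U)
    (fhat Fhat : ℝ × ℝ → ℝ)
    (uL ubar uR lam : ℝ) (hlam : 0 < lam)
    (A B FA FB uplus : ℝ)
    (hA : A = fhat (ubar, uR)) (hB : B = fhat (uL, ubar))
    (hFA : FA = Fhat (ubar, uR)) (hFB : FB = Fhat (uL, ubar))
    (hup : uplus = ubar - lam * (A - B))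
    (hCFL : lam * sSup ((deriv (deriv U)) '' Set.Icc (min ubar uplus) (max ubar uplus))
        * (A - B) ^ 2 ≤ 2 * (deriv U ubar * (A - B) - FA + FB)) :
    U uplus ≤ U ubar - lam * (FA - FB) := by
  have hC : Continuous (deriv (deriv U)) := by
    have := hU.continuous_iteratedDeriv 2 le_rfl
    rwa [iteratedDeriv_succ, iteratedDeriv_one] at this
  rcases eq_or_ne ubar uplus with h | h
  · have h0 : A - B = 0 := by
      have : lam * (A - B) = 0 := by linarith
      exact (mul_eq_zero.1 this).resolve_left hlam.ne'
    rw [h0] at hCFL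
    rw [← h]
    have : 0 ≤ FB - FA := by linarith
    nlinarith
  · obtain ⟨x, hx, hT⟩ := taylor_mean_remainder_lagrange_iteratedDeriv (n := 1) h
      (f := U) (by exact_mod_cast hU.contDiffOn)
    rw [iteratedDeriv_succ, iteratedDeriv_one] at hT
    have hdw : derivWithin U (Set.uIcc ubar uplus) ubar = deriv U ubar :=
      (hU.differentiable (by norm_num) ubar).derivWithin
        (uniqueDiffOn_uIcc h ubar Set.left_mem_uIcc)
    rw [taylorWithinEval_succ, taylor_within_zero_eval, iteratedDerivWithin_one, hdw] at hT
    norm_num at hT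
    have hle : deriv (deriv U) x ≤
        sSup ((deriv (deriv U)) '' Set.Icc (min ubar uplus) (max ubar uplus)) :=
      le_csSup (isCompact_Icc.image hC).bddAbove ⟨x, ⟨hx.1.le, hx.2.le⟩, rfl⟩
    set S := sSup ((deriv (deriv U)) '' Set.Icc (min ubar uplus) (max ubar uplus))
    have hd : uplus - ubar = -(lam * (A - B)) := by linarith
    rw [hd] at hT
    have h1 := mul_le_mul_of_nonneg_right hle (sq_nonneg (lam * (A - B)))
    have h2 := mul_le_mul_of_nonneg_left hCFL hlam.le
    nlinarith
end

section
/- Let f, F, U : ℝ → ℝ be differentiable with F'(u) = U'(u)·f'(u) for all u, and let α ∈ ℝ. Define the Lax–Friedrichs numerical flux f̂(a,b) = ½(f(a) + f(b)) − (α/2)(b − a) and the two-point function F̂(a,b) = ½(F(a) + F(b)) − (α/2)(U(b) − U(a)). Then F̂ is consistent, i.e. F̂(u,u) = F(u) for all u, and for all (a,b) one has ∂F̂/∂a(a,b) = U'(a)·∂f̂/∂a(a,b) and ∂F̂/∂b(a,b) = U'(b)·∂f̂/∂b(a,b); that is, F̂ is a proper numerical entropy flux for f̂. -/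
/-- The Lax–Friedrichs two-point entropy flux is a proper numerical entropy
flux for the Lax–Friedrichs numerical flux (scalar case). -/
theorem laxFriedrichs_proper_numerical_entropy_flux
    (f F U : ℝ → ℝ)
    (hf : Differentiable ℝ f) (hF : Differentiable ℝ F) (hU : Differentiable ℝ U)
    (hFU : ∀ u, deriv F u = deriv U u * deriv f u)
    (α : ℝ) (fhat Fhat : ℝ → ℝ → ℝ)
    (hfhat : ∀ a b, fhat a b = (1 / 2) * (f a + f b) - (α / 2) * (b - a))
    (hFhat : ∀ a b, Fhat a b = (1 / 2) * (F a + F b) - (α / 2) * (U b - U a)) :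
    (∀ u, Fhat u u = F u) ∧
    (∀ a b, deriv (fun x => Fhat x b) a = deriv U a * deriv (fun x => fhat x b) a) ∧
    (∀ a b, deriv (fun y => Fhat a y) b = deriv U b * deriv (fun y => fhat a y) b) := by
  have key1 : ∀ (g h : ℝ → ℝ), Differentiable ℝ g → Differentiable ℝ h → ∀ a b : ℝ,
      deriv (fun x => (1 / 2) * (g x + g b) - (α / 2) * (h b - h x)) a
        = (1 / 2) * deriv g a - (α / 2) * (-deriv h a) := by
    intro g h hg hh a b
    exact ((((hg a).hasDerivAt.add_const (g b)).const_mul (1 / 2)).sub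
      (((hh a).hasDerivAt.const_sub (h b)).const_mul (α / 2))).deriv
  have key2 : ∀ (g h : ℝ → ℝ), Differentiable ℝ g → Differentiable ℝ h → ∀ a b : ℝ,
      deriv (fun y => (1 / 2) * (g a + g y) - (α / 2) * (h y - h a)) b
        = (1 / 2) * deriv g b - (α / 2) * deriv h b := by
    intro g h hg hh a b
    exact ((((hg b).hasDerivAt.const_add (g a)).const_mul (1 / 2)).sub
      (((hh b).hasDerivAt.sub_const (h a)).const_mul (α / 2))).deriv
  refine ⟨fun u => by rw [hFhat]; ring, fun a b => ?_, fun a b => ?_⟩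
  · simp only [hFhat, hfhat]
    have h := key1 f (fun x => x) hf differentiable_id a b
    rw [key1 F U hF hU, h, hFU, deriv_id'']
    ring
  · simp only [hFhat, hfhat]
    have h := key2 f (fun x => x) hf differentiable_id a b
    rw [key2 F U hF hU, h, hFU, deriv_id'']
    ring
end

section
/- Let U : ℝ → ℝ be convex, let N ≥ 2, and let ω_1, …, ω_N > 0 with Σ_{q=1}^N ω_q = 1. Let u_L, u_1, …, u_N, u_R ∈ ℝ, let ū = Σ_{q=1}^N ω_q u_q, and let λ > 0. Let f̂, F̂ : ℝ² → ℝ, write f_mid = f̂(u_1, u_N), f_+ = f̂(u_N, u_R), f_− = f̂(u_L, u_1), F_mid = F̂(u_1, u_N), F_+ = F̂(u_N, u_R), F_− = F̂(u_L, u_1), and define the substeps H_N = u_N − (λ/ω_N)(f_+ − f_mid) and H_1 = u_1 − (λ/ω_1)(f_mid − f_−). If the first-order cell entropy inequalities U(H_N) ≤ U(u_N) − (λ/ω_N)(F_+ − F_mid) and U(H_1) ≤ U(u_1) − (λ/ω_1)(F_mid − F_−) hold, then the updated cell average ū⁺ = ū − λ(f_+ − f_−) satisfies the entropy-stable-like inequality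 U(ū⁺) ≤ Σ_{q=1}^N ω_q U(u_q) − λ(F_+ − F_−). -/
theorem sum_two_update {N : ℕ} (ω u : Fin N → ℝ) (a b : Fin N) (hab : a ≠ b) (x y : ℝ)
    (g : ℝ → ℝ) :
    ∑ q, ω q * g (if q = a then x else if q = b then y else u q)
      = (∑ q, ω q * g (u q)) + ω a * (g x - g (u a)) + ω b * (g y - g (u b)) := by
  have h : ∀ q, ω q * g (if q = a then x else if q = b then y else u q)
      = ω q * g (u q) + (if q = a then ω q * (g x - g (u q)) else 0)
        + (if q = b then ω q * (g y - g (u q)) else 0) := by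
    intro q
    by_cases h1 : q = a
    · have h2 : q ≠ b := fun h => hab (h1.symm.trans h)
      simp only [if_pos h1, if_neg h2]
      ring
    · by_cases h2 : q = b
      · simp only [if_neg h1, if_pos h2]
        ring
      · simp only [if_neg h1, if_neg h2]
        ring
  rw [Finset.sum_congr rfl (fun q _ => h q)]
  simp [Finset.sum_add_distrib]

theorem es_aux (U : ℝ → ℝ) (hU : ConvexOn ℝ Set.univ U) {N : ℕ}
    (ω u : Fin N → ℝ) (hω : ∀ q, 0 < ω q) (hωsum : ∑ q, ω q = 1)
    (a b : Fin N) (hab : a ≠ b) (lam f0 fp fm F0 Fp Fm HN H1 : ℝ)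
    (hHN : HN = u b - (lam / ω b) * (fp - f0))
    (hH1 : H1 = u a - (lam / ω a) * (f0 - fm))
    (hESN : U HN ≤ U (u b) - (lam / ω b) * (Fp - F0))
    (hES1 : U H1 ≤ U (u a) - (lam / ω a) * (F0 - Fm)) :
    U ((∑ q, ω q * u q) - lam * (fp - fm)) ≤ (∑ q, ω q * U (u q)) - lam * (Fp - Fm) := by
  have ha := hω a
  have hb := hω b
  have key := hU.map_sum_le (t := Finset.univ) (w := ω)
    (p := fun q => if q = a then H1 else if q = b then HN else u q)
    (fun q _ => (hω q).le) hωsum (fun q _ => Set.mem_univ _)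
  simp only [smul_eq_mul] at key
  have e1 := sum_two_update ω u a b hab H1 HN (fun z => z)
  have e2 := sum_two_update ω u a b hab H1 HN U
  rw [e1, e2] at key
  have c1 : ω a * (H1 - u a) = - (lam * (f0 - fm)) := by
    rw [hH1]; field_simp; ring
  have c2 : ω b * (HN - u b) = - (lam * (fp - f0)) := by
    rw [hHN]; field_simp; ring
  have d1 : ω a * (U H1 - U (u a)) ≤ - (lam * (F0 - Fm)) := by
    have h := mul_le_mul_of_nonneg_left hES1 ha.le
    have e : ω a * (lam / ω a * (F0 - Fm)) = lam * (F0 - Fm) := by field_simp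
    linarith
  have d2 : ω b * (U HN - U (u b)) ≤ - (lam * (Fp - F0)) := by
    have h := mul_le_mul_of_nonneg_left hESN hb.le
    have e : ω b * (lam / ω b * (Fp - F0)) = lam * (Fp - F0) := by field_simp
    linarith
  rw [c1, c2] at key
  have e3 : (∑ q, ω q * u q) + -(lam * (f0 - fm)) + -(lam * (fp - f0))
      = (∑ q, ω q * u q) - lam * (fp - fm) := by ring
  rw [e3] at key
  linarith

/-- The ES-like property (Theorem 3.3) of the DG scheme with forward Euler
time stepping for scalar conservation laws: the cell-average update satisfies
an entropy-stable-like inequality, given the first-order substep cell entropy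
inequalities. -/
theorem forwardEuler_DG_ES_like
    (U : ℝ → ℝ) (hU : ConvexOn ℝ Set.univ U)
    (N : ℕ) (hN : 2 ≤ N)
    (ω : Fin N → ℝ) (hω : ∀ q, 0 < ω q) (hωsum : ∑ q, ω q = 1)
    (uL uR : ℝ) (u : Fin N → ℝ)
    (ubar : ℝ) (hubar : ubar = ∑ q, ω q * u q)
    (lam : ℝ) (hlam : 0 < lam)
    (fhat Fhat : ℝ → ℝ → ℝ)
    (fmid fplus fminus Fmid Fplus Fminus HN H1 : ℝ)
    (hfmid : fmid = fhat (u ⟨0, by omega⟩) (u ⟨N - 1, by omega⟩))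
    (hfplus : fplus = fhat (u ⟨N - 1, by omega⟩) uR)
    (hfminus : fminus = fhat uL (u ⟨0, by omega⟩))
    (hFmid : Fmid = Fhat (u ⟨0, by omega⟩) (u ⟨N - 1, by omega⟩))
    (hFplus : Fplus = Fhat (u ⟨N - 1, by omega⟩) uR)
    (hFminus : Fminus = Fhat uL (u ⟨0, by omega⟩))
    (hHN : HN = u ⟨N - 1, by omega⟩ - (lam / ω ⟨N - 1, by omega⟩) * (fplus - fmid))
    (hH1 : H1 = u ⟨0, by omega⟩ - (lam / ω ⟨0, by omega⟩) * (fmid - fminus))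
    (hESN : U HN ≤ U (u ⟨N - 1, by omega⟩) - (lam / ω ⟨N - 1, by omega⟩) * (Fplus - Fmid))
    (hES1 : U H1 ≤ U (u ⟨0, by omega⟩) - (lam / ω ⟨0, by omega⟩) * (Fmid - Fminus)) :
    U (ubar - lam * (fplus - fminus)) ≤ (∑ q, ω q * U (u q)) - lam * (Fplus - Fminus) := by
  subst hubar
  exact es_aux U hU ω u hω hωsum ⟨0, by omega⟩ ⟨N - 1, by omega⟩
    (by intro h; have := congrArg Fin.val h; simp only at this; omega)
    lam fmid fplus fminus Fmid Fplus Fminus HN H1 hHN hH1 hESN hES1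
end

section
/- Let U : ℝ → ℝ be convex, let N ≥ 1, let ω_1, …, ω_N ≥ 0 with Σ_{q=1}^N ω_q = 1, let u_1, …, u_N ∈ ℝ, and let ū = Σ_{q=1}^N ω_q u_q. Define φ(θ) = Σ_{q=1}^N ω_q U(ū + θ(u_q − ū)). Then φ is continuous on [0,1], φ is non-decreasing on [0,1], φ(0) = U(ū), and φ(1) = Σ_{q=1}^N ω_q U(u_q). -/
/-- Proposition 3.6: the rescaled quadrature cell entropy φ(θ) is a
continuous, non-decreasing function on [0,1] with φ(0) = U(ū) and
φ(1) = Σ_q ω_q U(u_q). -/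
theorem rescaled_cell_entropy_monotone
    (U : ℝ → ℝ) (hU : ConvexOn ℝ Set.univ U)
    (N : ℕ) (hN : 1 ≤ N)
    (ω : Fin N → ℝ) (hω : ∀ q, 0 ≤ ω q) (hωsum : ∑ q, ω q = 1)
    (u : Fin N → ℝ) (ubar : ℝ) (hubar : ubar = ∑ q, ω q * u q)
    (φ : ℝ → ℝ) (hφ : ∀ θ, φ θ = ∑ q, ω q * U (ubar + θ * (u q - ubar))) :
    ContinuousOn φ (Set.Icc (0 : ℝ) 1) ∧
    MonotoneOn φ (Set.Icc (0 : ℝ) 1) ∧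
    φ 0 = U ubar ∧
    φ 1 = ∑ q, ω q * U (u q) := by
  have hc : Continuous U := by
    rw [← continuousOn_univ]
    exact hU.continuousOn isOpen_univ
  have h0 : φ 0 = U ubar := by
    rw [hφ]
    simp [← Finset.sum_mul, hωsum]
  have hJ : ∀ θ, U ubar ≤ φ θ := by
    intro θ
    have h := hU.map_sum_le (t := Finset.univ) (w := ω)
      (p := fun q => ubar + θ * (u q - ubar)) (fun q _ => hω q) hωsum (fun q _ => Set.mem_univ _)
    have e : ∑ q, ω q * (ubar + θ * (u q - ubar)) = ubar := by
      have : ∀ q, ω q * (ubar + θ * (u q - ubar))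
          = ω q * ((1 - θ) * ubar) + θ * (ω q * u q) := fun q => by ring
      rw [Finset.sum_congr rfl (fun q _ => this q), Finset.sum_add_distrib, ← Finset.sum_mul,
        ← Finset.mul_sum, hωsum, ← hubar]
      ring
    simp only [smul_eq_mul] at h
    rw [e] at h
    rw [hφ]
    exact h
  refine ⟨?_, ?_, h0, ?_⟩
  · have : φ = fun θ => ∑ q, ω q * U (ubar + θ * (u q - ubar)) := funext hφ
    rw [this]
    apply Continuous.continuousOn
    fun_prop
  · intro a ha b hb hab
    rcases eq_or_lt_of_le hb.1 with hb0 | hb0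
    · have : a = b := le_antisymm hab (hb0 ▸ ha.1)
      rw [this]
    · have ht0 : 0 ≤ a / b := div_nonneg ha.1 hb0.le
      have ht1 : a / b ≤ 1 := (div_le_one hb0).2 hab
      have key : φ a ≤ (1 - a / b) * U ubar + a / b * φ b := by
        have e : (1 - a / b) * U ubar + a / b * φ b
            = ∑ q, ω q * ((1 - a / b) * U ubar + a / b * U (ubar + b * (u q - ubar))) := by
          simp only [mul_add, Finset.sum_add_distrib]
          rw [← Finset.sum_mul, hωsum, hφ b, Finset.mul_sum, one_mul]
          congr 1
          exact Finset.sum_congr rfl (fun q _ => by ring)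
        rw [e, hφ a]
        refine Finset.sum_le_sum fun q _ => mul_le_mul_of_nonneg_left ?_ (hω q)
        have h := hU.2 (Set.mem_univ ubar) (Set.mem_univ (ubar + b * (u q - ubar)))
          (sub_nonneg.2 ht1) ht0 (by ring)
        simp only [smul_eq_mul] at h
        have e2 : (1 - a / b) * ubar + a / b * (ubar + b * (u q - ubar))
            = ubar + a * (u q - ubar) := by
          field_simp
          ring
        rwa [e2] at h
      nlinarith [mul_le_mul_of_nonneg_left (hJ b) (sub_nonneg.2 ht1)]
  · rw [hφ]
    simp
end

section
/- Let U : ℝ → ℝ be convex, let N ≥ 1, let ω_1, …, ω_N ≥ 0 with Σ_{q=1}^N ω_q = 1, let u_1, …, u_N ∈ ℝ, and let ū = Σ_{q=1}^N ω_q u_q. Set U¹ˢᵗ = U(ū) and Uʰⁱᵍʰ = Σ_{q=1}^N ω_q U(u_q), and let Uᵘᵖ ∈ ℝ satisfy U¹ˢᵗ ≤ Uᵘᵖ. Assume U¹ˢᵗ < Uʰⁱᵍʰ and define θ = min{(Uᵘᵖ − U¹ˢᵗ)/(Uʰⁱᵍʰ − U¹ˢᵗ), 1}. Then 0 ≤ θ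 ≤ 1 and Σ_{q=1}^N ω_q U(ū + θ(u_q − ū)) ≤ Uᵘᵖ. -/
/-- Theorem 3.7: the Zhang–Shu-type entropy-stable limiter with the explicit
scaling coefficient θ enforces the prescribed entropy bound. -/
theorem ES_limiter_enforces_entropy_bound
    (U : ℝ → ℝ) (hU : ConvexOn ℝ Set.univ U)
    (N : ℕ) (hN : 1 ≤ N)
    (ω : Fin N → ℝ) (hω : ∀ q, 0 ≤ ω q) (hωsum : ∑ q, ω q = 1)
    (u : Fin N → ℝ) (ubar : ℝ) (hubar : ubar = ∑ q, ω q * u q)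
    (U1st Uhigh Uup : ℝ)
    (hU1st : U1st = U ubar) (hUhigh : Uhigh = ∑ q, ω q * U (u q))
    (hUup : U1st ≤ Uup) (hlt : U1st < Uhigh)
    (θ : ℝ) (hθ : θ = min ((Uup - U1st) / (Uhigh - U1st)) 1) :
    0 ≤ θ ∧ θ ≤ 1 ∧ ∑ q, ω q * U (ubar + θ * (u q - ubar)) ≤ Uup := by
  have hd : 0 < Uhigh - U1st := sub_pos.mpr hlt
  have h0 : 0 ≤ θ := by
    rw [hθ]
    exact le_min (div_nonneg (sub_nonneg.mpr hUup) hd.le) zero_le_one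
  have h1 : θ ≤ 1 := by
    rw [hθ]
    exact min_le_right _ _
  have h2 : θ * (Uhigh - U1st) ≤ Uup - U1st := by
    rw [← le_div_iff₀ hd, hθ]
    exact min_le_left _ _
  refine ⟨h0, h1, ?_⟩
  have key : ∀ q, ω q * U (ubar + θ * (u q - ubar))
      ≤ (1 - θ) * U1st * ω q + θ * (ω q * U (u q)) := by
    intro q
    have h := hU.2 (Set.mem_univ ubar) (Set.mem_univ (u q))
      (sub_nonneg.mpr h1) h0 (by ring)
    simp only [smul_eq_mul] at h
    have e : (1 - θ) * ubar + θ * u q = ubar + θ * (u q - ubar) := by ring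
    rw [e, ← hU1st] at h
    have h' := mul_le_mul_of_nonneg_left h (hω q)
    linarith
  have hs := Finset.sum_le_sum (fun q (_ : q ∈ Finset.univ) => key q)
  rw [Finset.sum_add_distrib, ← Finset.mul_sum, ← Finset.mul_sum, hωsum, ← hUhigh] at hs
  linarith
end

section
/- Let U : ℝ → ℝ be twice continuously differentiable with U''(x) ≥ m for all x, where m > 0. Let N ≥ 1, let ω_1, …, ω_N > 0 with Σ_{q=1}^N ω_q = 1, and set ω_min = min_q ω_q. Let u_1, …, u_N ∈ ℝ, ū = Σ_{q=1}^N ω_q u_q, U¹ˢᵗ = U(ū), Uʰⁱᵍʰ = Σ_{q=1}^N ω_q U(u_q), and let Uᵘᵖ ∈ ℝ satisfy U¹ˢᵗ ≤ Uᵘᵖ < Uʰⁱᵍʰ. Define θ = (Uᵘᵖ − U¹ˢᵗ)/(Uʰⁱᵍʰ − U¹ˢᵗ). Then (1 − θ) · (max_{1 ≤ q ≤ N} |u_q − ū|)² ≤ (2/(m · ω_min)) · (Uʰⁱᵍʰ − Uᵘᵖ). -/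
theorem tangent_quadratic_bound (U : ℝ → ℝ) (hU : ContDiff ℝ 2 U) (m : ℝ)
    (hU'' : ∀ x, m ≤ deriv (deriv U) x) (x y : ℝ) :
    U x + deriv U x * (y - x) + m / 2 * (y - x) ^ 2 ≤ U y := by
  have hd : Differentiable ℝ U := hU.differentiable (by norm_num)
  have hU1 : ContDiff ℝ 1 (deriv U) := by
    have h2 : ContDiff ℝ (1 + 1) U := by
      convert hU using 1
      norm_num
    exact (contDiff_succ_iff_deriv.mp h2).2.2
  have hdd : Differentiable ℝ (deriv U) := hU1.differentiable (by norm_num)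
  have hmono : Monotone (fun t => deriv U t - m * t) := by
    have hD : ∀ t, HasDerivAt (fun t => deriv U t - m * t) (deriv (deriv U) t - m * 1) t :=
      fun t => (hdd t).hasDerivAt.sub ((hasDerivAt_id t).const_mul m)
    apply monotone_of_deriv_nonneg (fun t => (hD t).differentiableAt)
    intro t
    rw [(hD t).deriv]
    linarith [hU'' t]
  have hg : ∀ t, HasDerivAt (fun t => U t - m / 2 * t ^ 2) (deriv U t - m * t) t := by
    intro t
    have := (hd t).hasDerivAt.sub ((hasDerivAt_pow 2 t).const_mul (m / 2))
    have e : deriv U t - m / 2 * (((2 : ℕ) : ℝ) * t ^ (2 - 1)) = deriv U t - m * t := by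
      simp only [Nat.add_one_sub_one, pow_one, Nat.cast_ofNat]
      ring
    rw [e] at this
    exact this
  have hc : Continuous (fun t => U t - m / 2 * t ^ 2) :=
    continuous_iff_continuousAt.mpr fun t => (hg t).continuousAt
  rcases lt_trichotomy x y with h | h | h
  · obtain ⟨c, hc1, hc2⟩ := exists_hasDerivAt_eq_slope _ _ h hc.continuousOn (fun t _ => hg t)
    have h1 := hmono hc1.1.le
    simp only at h1
    rw [hc2, le_div_iff₀ (by linarith)] at h1
    nlinarith
  · subst h
    simp
  · obtain ⟨c, hc1, hc2⟩ := exists_hasDerivAt_eq_slope _ _ h hc.continuousOn (fun t _ => hg t)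
    have h1 := hmono hc1.2.le
    simp only at h1
    rw [hc2, div_le_iff₀ (by linarith)] at h1
    nlinarith

/-- Node-value form of Theorem 3.15(1): the modification introduced by the
entropy-stable limiter is controlled by the entropy gap U^high − U^up. -/
theorem ES_limiter_modification_bound
    (U : ℝ → ℝ) (hU : ContDiff ℝ 2 U)
    (m : ℝ) (hm : 0 < m) (hU'' : ∀ x, m ≤ deriv (deriv U) x)
    (N : ℕ) (hN : 1 ≤ N)
    (ω : Fin N → ℝ) (hω : ∀ q, 0 < ω q) (hωsum : ∑ q, ω q = 1)
    (ωmin : ℝ)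
    (hωmin : ωmin = Finset.univ.inf' (Finset.univ_nonempty_iff.mpr ⟨(⟨0, hN⟩ : Fin N)⟩) ω)
    (u : Fin N → ℝ) (ubar : ℝ) (hubar : ubar = ∑ q, ω q * u q)
    (U1st Uhigh Uup : ℝ)
    (hU1st : U1st = U ubar) (hUhigh : Uhigh = ∑ q, ω q * U (u q))
    (hle : U1st ≤ Uup) (hlt : Uup < Uhigh)
    (θ : ℝ) (hθ : θ = (Uup - U1st) / (Uhigh - U1st)) :
    (1 - θ) *
      (Finset.univ.sup' (Finset.univ_nonempty_iff.mpr ⟨(⟨0, hN⟩ : Fin N)⟩)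
        (fun q => |u q - ubar|)) ^ 2 ≤
      (2 / (m * ωmin)) * (Uhigh - Uup) := by
  have hne : (Finset.univ : Finset (Fin N)).Nonempty :=
    Finset.univ_nonempty_iff.mpr ⟨(⟨0, hN⟩ : Fin N)⟩
  have hpos : 0 < ωmin := by
    rw [hωmin, Finset.lt_inf'_iff]
    exact fun q _ => hω q
  have hsum : m / 2 * ∑ q, ω q * (u q - ubar) ^ 2 ≤ Uhigh - U1st := by
    have h1 : ∑ q, ω q * (U ubar + deriv U ubar * (u q - ubar) + m / 2 * (u q - ubar) ^ 2)
        ≤ ∑ q, ω q * U (u q) :=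
      Finset.sum_le_sum fun q _ => mul_le_mul_of_nonneg_left
        (tangent_quadratic_bound U hU m hU'' ubar (u q)) (hω q).le
    have h2 : ∑ q, ω q * (U ubar + deriv U ubar * (u q - ubar) + m / 2 * (u q - ubar) ^ 2)
        = U ubar * ∑ q, ω q + deriv U ubar * (∑ q, ω q * u q - ubar * ∑ q, ω q)
          + m / 2 * ∑ q, ω q * (u q - ubar) ^ 2 := by
      simp only [Finset.mul_sum, ← Finset.sum_sub_distrib, ← Finset.sum_add_distrib]
      exact Finset.sum_congr rfl fun q _ => by ring
    rw [h2, hωsum, ← hubar, ← hUhigh, ← hU1st] at h1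
    linarith
  obtain ⟨q, -, hq⟩ := Finset.exists_mem_eq_sup' hne (fun q => |u q - ubar|)
  rw [hq, sq_abs]
  have hmin : ωmin ≤ ω q := by
    rw [hωmin]
    exact Finset.inf'_le _ (Finset.mem_univ q)
  have hterm : ω q * (u q - ubar) ^ 2 ≤ ∑ q, ω q * (u q - ubar) ^ 2 :=
    Finset.single_le_sum (f := fun q => ω q * (u q - ubar) ^ 2)
      (fun i _ => mul_nonneg (hω i).le (sq_nonneg _)) (Finset.mem_univ q)
  have hkey : m / 2 * (ωmin * (u q - ubar) ^ 2) ≤ Uhigh - U1st :=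
    (mul_le_mul_of_nonneg_left
      ((mul_le_mul_of_nonneg_right hmin (sq_nonneg _)).trans hterm) (by positivity)).trans hsum
  have hgap : 0 < Uhigh - U1st := by linarith
  have h1θ : 1 - θ = (Uhigh - Uup) / (Uhigh - U1st) := by
    rw [hθ]
    field_simp
    ring
  rw [h1θ, div_mul_eq_mul_div, div_mul_eq_mul_div, div_le_div_iff₀ hgap (by positivity)]
  have := mul_le_mul_of_nonneg_left hkey (sub_nonneg.mpr hlt.le)
  linarith
end

section
/- Let U : ℝ → ℝ be differentiable and convex (so that U' is non-decreasing). Let f̂ : ℝ² → ℝ be continuously differentiable with ∂f̂/∂u⁻(a,b) ≥ 0 and ∂f̂/∂u⁺(a,b) ≤ 0 for all (a,b), and let F̂ : ℝ² → ℝ be continuously differentiable with ∂F̂/∂u⁻(a,b) = U'(a)·∂f̂/∂u⁻(a,b) and ∂F̂/∂u⁺(a,b) = U'(b)·∂f̂/∂u⁺(a,b) for all (a,b). Then for all u, v, w ∈ ℝ: U'(u)·(f̂(u,w) − f̂(v,u)) − F̂(u,w) + F̂(v,u) ≥ 0. -/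
theorem aux_min (g : ℝ → ℝ) (hg : Differentiable ℝ g) (u : ℝ)
    (h1 : ∀ x, u < x → 0 ≤ deriv g x) (h2 : ∀ x, x < u → deriv g x ≤ 0) (w : ℝ) :
    g u ≤ g w := by
  rcases le_total u w with h | h
  · have := monotoneOn_of_deriv_nonneg (convex_Ici u) hg.continuous.continuousOn
      hg.differentiableOn (fun x hx => h1 x (by simpa using hx))
    exact this (Set.mem_Ici.2 le_rfl) (Set.mem_Ici.2 h) h
  · have := antitoneOn_of_deriv_nonpos (convex_Iic u) hg.continuous.continuousOn
      hg.differentiableOn (fun x hx => h2 x (by simpa using hx))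
    exact this (Set.mem_Iic.2 h) (Set.mem_Iic.2 le_rfl) h

/-- Non-negativity of the numerator of the CFL conditions: for a monotone
numerical flux f̂ and an associated proper numerical entropy flux F̂ of a
convex entropy U, the local entropy production term is non-negative. -/
theorem CFL_numerator_nonneg
    (U : ℝ → ℝ) (hUdiff : Differentiable ℝ U) (hUconv : ConvexOn ℝ Set.univ U)
    (fhat : ℝ → ℝ → ℝ) (hf : ContDiff ℝ 1 (Function.uncurry fhat))
    (hf1 : ∀ a b, 0 ≤ deriv (fun x => fhat x b) a)
    (hf2 : ∀ a b, deriv (fun y => fhat a y) b ≤ 0)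
    (Fhat : ℝ → ℝ → ℝ) (hF : ContDiff ℝ 1 (Function.uncurry Fhat))
    (hF1 : ∀ a b, deriv (fun x => Fhat x b) a = deriv U a * deriv (fun x => fhat x b) a)
    (hF2 : ∀ a b, deriv (fun y => Fhat a y) b = deriv U b * deriv (fun y => fhat a y) b) :
    ∀ u v w : ℝ,
      0 ≤ deriv U u * (fhat u w - fhat v u) - Fhat u w + Fhat v u := by
  intro u v w
  have hmono : Monotone (deriv U) := by
    have := hUconv.monotoneOn_deriv (fun x _ => hUdiff x)
    exact fun a b hab => this (Set.mem_univ a) (Set.mem_univ b) hab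
  have hfd := hf.differentiable one_ne_zero
  have hFd := hF.differentiable one_ne_zero
  have df1 : ∀ b, Differentiable ℝ (fun x => fhat x b) := fun b =>
    hfd.comp (differentiable_id.prodMk (differentiable_const b))
  have df2 : ∀ a, Differentiable ℝ (fun y => fhat a y) := fun a =>
    hfd.comp ((differentiable_const a).prodMk differentiable_id)
  have dF1 : ∀ b, Differentiable ℝ (fun x => Fhat x b) := fun b =>
    hFd.comp (differentiable_id.prodMk (differentiable_const b))
  have dF2 : ∀ a, Differentiable ℝ (fun y => Fhat a y) := fun a =>
    hFd.comp ((differentiable_const a).prodMk differentiable_id)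
  have e2 : ∀ b, deriv (fun y => deriv U u * fhat u y - Fhat u y) b
      = (deriv U u - deriv U b) * deriv (fun y => fhat u y) b := by
    intro b
    have := (((df2 u b).hasDerivAt.const_mul (deriv U u)).sub (dF2 u b).hasDerivAt).deriv
    rw [hF2] at this
    rw [sub_mul]
    exact this
  have e1 : ∀ a, deriv (fun x => Fhat x u - deriv U u * fhat x u) a
      = (deriv U a - deriv U u) * deriv (fun x => fhat x u) a := by
    intro a
    have := ((dF1 u a).hasDerivAt.sub ((df1 u a).hasDerivAt.const_mul (deriv U u))).deriv
    rw [hF1] at this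
    rw [sub_mul]
    exact this
  have k2 := aux_min (fun y => deriv U u * fhat u y - Fhat u y)
    (((df2 u).const_mul _).sub (dF2 u)) u
    (fun x hx => by
      rw [e2]
      exact mul_nonneg_of_nonpos_of_nonpos (sub_nonpos.2 (hmono hx.le)) (hf2 u x))
    (fun x hx => by
      rw [e2]
      exact mul_nonpos_of_nonneg_of_nonpos (sub_nonneg.2 (hmono hx.le)) (hf2 u x)) w
  have k1 := aux_min (fun x => Fhat x u - deriv U u * fhat x u)
    ((dF1 u).sub ((df1 u).const_mul _)) u
    (fun x hx => by
      rw [e1]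
      exact mul_nonneg (sub_nonneg.2 (hmono hx.le)) (hf1 x u))
    (fun x hx => by
      rw [e1]
      exact mul_nonpos_of_nonpos_of_nonneg (sub_nonpos.2 (hmono hx.le)) (hf1 x u)) v
  linarith
end

section
/- Let E be a real vector space, let U : E → ℝ be convex, let N ≥ 1, let ω_1, …, ω_N ≥ 0 with Σ_{q=1}^N ω_q = 1, let u_1, …, u_N ∈ E, and let ū = Σ_{q=1}^N ω_q u_q. Set U¹ˢᵗ = U(ū) and Uʰⁱᵍʰ = Σ_{q=1}^N ω_q U(u_q), and let Uᵘᵖ ∈ ℝ satisfy U¹ˢᵗ ≤ Uᵘᵖ. Assume U¹ˢᵗ < Uʰⁱᵍʰ and define θ = min{(Uᵘᵖ − U¹ˢᵗ)/(Uʰⁱᵍʰ − U¹ˢᵗ), 1}. Then 0 ≤ θ ≤ 1 and Σ_{q=1}^N ω_q U(ū + θ·(u_q − ū)) ≤ Uᵘᵖ. -/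
/-- Entropy-stable limiter theorem for systems of conservation laws
(vector-valued version of Theorem 3.7, Section 4, scheme (4.10)). -/
theorem ES_limiter_enforces_entropy_bound_systems
    (E : Type*) [AddCommGroup E] [Module ℝ E]
    (U : E → ℝ) (hU : ConvexOn ℝ Set.univ U)
    (N : ℕ) (hN : 1 ≤ N)
    (ω : Fin N → ℝ) (hω : ∀ q, 0 ≤ ω q) (hωsum : ∑ q, ω q = 1)
    (u : Fin N → E) (ubar : E) (hubar : ubar = ∑ q, ω q • u q)
    (U1st Uhigh Uup : ℝ)
    (hU1st : U1st = U ubar) (hUhigh : Uhigh = ∑ q, ω q * U (u q))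
    (hUup : U1st ≤ Uup) (hlt : U1st < Uhigh)
    (θ : ℝ) (hθ : θ = min ((Uup - U1st) / (Uhigh - U1st)) 1) :
    0 ≤ θ ∧ θ ≤ 1 ∧ ∑ q, ω q * U (ubar + θ • (u q - ubar)) ≤ Uup := by
  have hd : 0 < Uhigh - U1st := sub_pos.mpr hlt
  have h0 : 0 ≤ θ := by
    rw [hθ]
    exact le_min (div_nonneg (sub_nonneg.mpr hUup) hd.le) zero_le_one
  have h1 : θ ≤ 1 := by
    rw [hθ]
    exact min_le_right _ _
  have h2 : θ * (Uhigh - U1st) ≤ Uup - U1st := by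
    rw [← le_div_iff₀ hd, hθ]
    exact min_le_left _ _
  refine ⟨h0, h1, ?_⟩
  have hq : ∀ q, U (ubar + θ • (u q - ubar)) ≤ (1 - θ) * U1st + θ * U (u q) := by
    intro q
    have h := hU.2 (Set.mem_univ ubar) (Set.mem_univ (u q)) (sub_nonneg.mpr h1) h0 (by ring)
    have he : ubar + θ • (u q - ubar) = (1 - θ) • ubar + θ • u q := by module
    rw [he, hU1st]
    simpa only [smul_eq_mul] using h
  calc ∑ q, ω q * U (ubar + θ • (u q - ubar))
      ≤ ∑ q, ω q * ((1 - θ) * U1st + θ * U (u q)) :=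
        Finset.sum_le_sum fun q _ => mul_le_mul_of_nonneg_left (hq q) (hω q)
    _ = (∑ q, ω q) * ((1 - θ) * U1st) + θ * ∑ q, ω q * U (u q) := by
        rw [Finset.sum_mul, Finset.mul_sum, ← Finset.sum_add_distrib]
        exact Finset.sum_congr rfl fun q _ => by ring
    _ = U1st + θ * (Uhigh - U1st) := by
        rw [hωsum, ← hUhigh]
        ring
    _ ≤ Uup := by linarith
end

section
/- Let p ≥ 1, let U : ℝ^p → ℝ be convex, let N ≥ 2, and let ω_1, …, ω_N > 0 with Σ_{q=1}^N ω_q = 1. Let u_L, u_1, …, u_N, u_R ∈ ℝ^p, let ū = Σ_{q=1}^N ω_q u_q, and let λ > 0. Let f̂ : ℝ^p × ℝ^p → ℝ^p and F̂ : ℝ^p × ℝ^p → ℝ, write f_mid = f̂(u_1, u_N), f_+ = f̂(u_N, u_R), f_− = f̂(u_L, u_1), F_mid = F̂(u_1, u_N), F_+ = F̂(u_N, u_R), F_− = F̂(u_L, u_1), and define the substeps H_N = u_N − (λ/ω_N)(f_+ − f_mid) and H_1 = u_1 − (λ/ω_1)(f_mid − f_−). If U(H_N) ≤ U(u_N) −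 (λ/ω_N)(F_+ − F_mid) and U(H_1) ≤ U(u_1) − (λ/ω_1)(F_mid − F_−), then the updated cell average ū⁺ = ū − λ(f_+ − f_−) satisfies U(ū⁺) ≤ Σ_{q=1}^N ω_q U(u_q) − λ(F_+ − F_−). -/
/-- The ES-like property (Theorem 4.3) of the DG scheme with forward Euler
time stepping for one-dimensional systems of conservation laws. -/
theorem forwardEuler_DG_ES_like_systems
    (p : ℕ) (hp : 1 ≤ p)
    (U : (Fin p → ℝ) → ℝ) (hU : ConvexOn ℝ Set.univ U)
    (N : ℕ) (hN : 2 ≤ N)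
    (ω : Fin N → ℝ) (hω : ∀ q, 0 < ω q) (hωsum : ∑ q, ω q = 1)
    (uL uR : Fin p → ℝ) (u : Fin N → (Fin p → ℝ))
    (ubar : Fin p → ℝ) (hubar : ubar = ∑ q, ω q • u q)
    (lam : ℝ) (hlam : 0 < lam)
    (fhat : (Fin p → ℝ) → (Fin p → ℝ) → (Fin p → ℝ))
    (Fhat : (Fin p → ℝ) → (Fin p → ℝ) → ℝ)
    (fmid fplus fminus : Fin p → ℝ) (Fmid Fplus Fminus : ℝ)
    (HN H1 : Fin p → ℝ)
    (hfmid : fmid = fhat (u ⟨0, by omega⟩) (u ⟨N - 1, by omega⟩))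
    (hfplus : fplus = fhat (u ⟨N - 1, by omega⟩) uR)
    (hfminus : fminus = fhat uL (u ⟨0, by omega⟩))
    (hFmid : Fmid = Fhat (u ⟨0, by omega⟩) (u ⟨N - 1, by omega⟩))
    (hFplus : Fplus = Fhat (u ⟨N - 1, by omega⟩) uR)
    (hFminus : Fminus = Fhat uL (u ⟨0, by omega⟩))
    (hHN : HN = u ⟨N - 1, by omega⟩ - (lam / ω ⟨N - 1, by omega⟩) • (fplus - fmid))
    (hH1 : H1 = u ⟨0, by omega⟩ - (lam / ω ⟨0, by omega⟩) • (fmid - fminus))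
    (hESN : U HN ≤ U (u ⟨N - 1, by omega⟩) - (lam / ω ⟨N - 1, by omega⟩) * (Fplus - Fmid))
    (hES1 : U H1 ≤ U (u ⟨0, by omega⟩) - (lam / ω ⟨0, by omega⟩) * (Fmid - Fminus)) :
    U (ubar - lam • (fplus - fminus)) ≤ (∑ q, ω q * U (u q)) - lam * (Fplus - Fminus) := by
  clear hfmid hfplus hfminus hFmid hFplus hFminus
  have hab : (⟨0, by omega⟩ : Fin N) ≠ ⟨N - 1, by omega⟩ := by
    intro h
    have := congrArg Fin.val h
    simp at this
    omega
  generalize (⟨0, by omega⟩ : Fin N) = a at *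
  generalize (⟨N - 1, by omega⟩ : Fin N) = b at *
  let v : Fin N → (Fin p → ℝ) := fun q => if q = a then H1 else if q = b then HN else u q
  have hwa := (hω a).ne'
  have hwb := (hω b).ne'
  have hJ := hU.map_sum_le (t := Finset.univ) (w := ω) (p := v)
    (fun q _ => (hω q).le) hωsum (fun q _ => Set.mem_univ _)
  have hv : ∑ q, ω q • v q = ubar - lam • (fplus - fminus) := by
    have h1 : ∀ q, ω q • v q = ω q • u q - (if q = a then lam • (fmid - fminus) else 0)
        - (if q = b then lam • (fplus - fmid) else 0) := by
      intro q
      by_cases h : q = a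
      · subst h
        simp [v, hab, hH1, smul_sub, smul_smul, mul_div_cancel₀, hwa]
      · by_cases h' : q = b
        · subst h'
          simp [v, h, hHN, smul_sub, smul_smul, mul_div_cancel₀, hwb]
        · simp [v, h, h']
    rw [Finset.sum_congr rfl (fun q _ => h1 q), Finset.sum_sub_distrib, Finset.sum_sub_distrib,
      hubar]
    simp only [Finset.sum_ite_eq', Finset.mem_univ, if_true]
    module
  rw [hv] at hJ
  refine hJ.trans ?_
  have h2 : ∀ q, ω q • U (v q) ≤ ω q * U (u q) - (if q = a then lam * (Fmid - Fminus) else 0)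
      - (if q = b then lam * (Fplus - Fmid) else 0) := by
    intro q
    by_cases h : q = a
    · subst h
      have := mul_le_mul_of_nonneg_left hES1 (hω q).le
      rw [mul_sub, ← mul_assoc, mul_div_cancel₀ _ hwa] at this
      simpa [v, hab] using this
    · by_cases h' : q = b
      · subst h'
        have := mul_le_mul_of_nonneg_left hESN (hω q).le
        rw [mul_sub, ← mul_assoc, mul_div_cancel₀ _ hwb] at this
        simpa [v, h] using this
      · simp [v, h, h']
  refine (Finset.sum_le_sum (fun q _ => h2 q)).trans ?_
  rw [Finset.sum_sub_distrib, Finset.sum_sub_distrib]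
  simp only [Finset.sum_ite_eq', Finset.mem_univ, if_true]
  linarith
end
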